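/- arXiv:1801.07891 — 2 statements merged into one kernel-verified Lean document; each statement's English description precedes it below -/
import Mathlib

section
/- Let d ≥ 1, T > 0 and 0 < C₁ ≤ C₂. Let g : [0,T] × ℝ^d × ℝ^d → ℝ be ℤ^d-periodic in x, continuous, continuously differentiable in (t,x) and twice continuously differentiable in v for 0 < t < T, and satisfy ∂_t g + v·∇_x g = ℛ[g] U[g] at every point with 0 < t < T. Suppose moreover there is C₃ > 0 with |g(t,x,v)| + |∇_x g(t,x,v)| + |∇_v g(t,x,v)| + |D²_v g(t,x,v)| ≤ C₃ e^{−|v|²/8} for all (t,x,v). If C₁ √μ(v) ≤ g(0,x,v) ≤ C₂ √μ(v) for all (x,v) ∈ ℝ^d × ℝ^d, then C₁ √μ(v) ≤ g(t,x,v) ≤ C₂ √μ(v) for all (t,x,v) ∈ [0,T] × ℝ^d × ℝ^d. -/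
open Real MeasureTheory
open scoped BigOperators ENNReal

noncomputable section

abbrev E (d : ℕ) := EuclideanSpace ℝ (Fin d)
abbrev Z (d : ℕ) := ℝ × E d × E d

variable {d : ℕ}

/-- The kinetic cylinder `Q_r(z₀)`. -/
def kCyl (r : ℝ) (z₀ : Z d) : Set (Z d) :=
  {z | z₀.1 - r ^ 2 < z.1 ∧ z.1 ≤ z₀.1 ∧
    ‖z.2.1 - z₀.2.1 - (z.1 - z₀.1) • z₀.2.2‖ < r ^ 3 ∧ ‖z.2.2 - z₀.2.2‖ < r}

/-- Partial derivative in time. -/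
def pt (g : Z d → ℝ) (z : Z d) : ℝ := deriv (fun s => g (s, z.2.1, z.2.2)) z.1

/-- Partial derivative in the direction `x i`. -/
def px (g : Z d → ℝ) (i : Fin d) (z : Z d) : ℝ :=
  deriv (fun s : ℝ => g (z.1, z.2.1 + s • EuclideanSpace.single i (1 : ℝ), z.2.2)) 0

/-- Partial derivative in the direction `v i`. -/
def pv (g : Z d → ℝ) (i : Fin d) (z : Z d) : ℝ :=
  deriv (fun s : ℝ => g (z.1, z.2.1, z.2.2 + s • EuclideanSpace.single i (1 : ℝ))) 0

/-- Second partial derivative in `v i`, `v j`. -/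
def pvv (g : Z d → ℝ) (i j : Fin d) : Z d → ℝ := pv (pv g j) i

/-- Transport derivative `∂_t g + v ⋅ ∇_x g`. -/
def Yop (g : Z d → ℝ) (z : Z d) : ℝ := pt g z + ∑ i, z.2.2 i * px g i z

/-- Euclidean norm of the velocity gradient `∇_v g`. -/
def gradvNorm (g : Z d → ℝ) (z : Z d) : ℝ := Real.sqrt (∑ i, (pv g i z) ^ 2)

/-- (Frobenius) norm of the velocity Hessian `D²_v g`. -/
def hessvNorm (g : Z d → ℝ) (z : Z d) : ℝ := Real.sqrt (∑ i, ∑ j, (pvv g i j z) ^ 2)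

/-- `g` is `C¹` in `(t,x)` and `C²` in `v` on `Q`, with continuous partial derivatives. -/
structure KinReg (g : Z d → ℝ) (Q : Set (Z d)) : Prop where
  cont : ContinuousOn g Q
  dt : ∀ z ∈ Q, DifferentiableAt ℝ (fun s => g (s, z.2.1, z.2.2)) z.1
  dx : ∀ z ∈ Q, ∀ i, DifferentiableAt ℝ
    (fun s : ℝ => g (z.1, z.2.1 + s • EuclideanSpace.single i (1 : ℝ), z.2.2)) 0
  dv : ∀ z ∈ Q, ∀ i, DifferentiableAt ℝ
    (fun s : ℝ => g (z.1, z.2.1, z.2.2 + s • EuclideanSpace.single i (1 : ℝ))) 0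
  dvv : ∀ z ∈ Q, ∀ i j, DifferentiableAt ℝ
    (fun s : ℝ => pv g j (z.1, z.2.1, z.2.2 + s • EuclideanSpace.single i (1 : ℝ))) 0
  ptc : ContinuousOn (pt g) Q
  pxc : ∀ i, ContinuousOn (px g i) Q
  pvc : ∀ i, ContinuousOn (pv g i) Q
  pvvc : ∀ i j, ContinuousOn (pvv g i j) Q

/-- Sup norm (in `ℝ≥0∞`) of `h` over the set `Q`. -/
def supAbs (Q : Set (Z d)) (h : Z d → ℝ) : ℝ≥0∞ := ⨆ z ∈ Q, ENNReal.ofReal |h z|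

/-- Kinetic Hölder seminorm of exponent `β` on `Q`. -/
def kHolder (β : ℝ) (Q : Set (Z d)) (h : Z d → ℝ) : ℝ≥0∞ :=
  ⨆ (z₀ ∈ Q) (r : ℝ) (_ : 0 < r) (_ : kCyl r z₀ ⊆ Q) (z ∈ kCyl r z₀),
    ENNReal.ofReal (|h z - h z₀| / r ^ β)

/-- Polynomial of kinetic degree at most 2. -/
def kpoly (a b : ℝ) (q : Fin d → ℝ) (M : Matrix (Fin d) (Fin d) ℝ) (z : Z d) : ℝ :=
  a + b * z.1 + ∑ i, q i * z.2.2 i + (1 / 2) * ∑ i, ∑ j, M i j * z.2.2 i * z.2.2 j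

/-- Kinetic Hölder seminorm of order `2 + α` on `Q`, by approximation with polynomials of
kinetic degree at most 2. -/
def kSemi2 (α : ℝ) (Q : Set (Z d)) (g : Z d → ℝ) : ℝ≥0∞ :=
  ⨆ (z₀ ∈ Q) (r : ℝ) (_ : 0 < r) (_ : kCyl r z₀ ⊆ Q),
    (⨅ (a : ℝ) (b : ℝ) (q : Fin d → ℝ) (M : Matrix (Fin d) (Fin d) ℝ),
      ⨆ z ∈ kCyl r z₀, ENNReal.ofReal |g z - kpoly a b q M z|)
      / ENNReal.ofReal (r ^ (2 + α))

/-- The standard Gaussian `μ(v) = (2π)^{−d/2} e^{−|v|²/2}`. -/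
def gaussμ (d : ℕ) (v : E d) : ℝ := (2 * π) ^ (-(d : ℝ) / 2) * Real.exp (-‖v‖ ^ 2 / 2)

/-- The local density coefficient `ℛ[g](t,x) = ∫ g(t,x,v) √μ(v) dv`. -/
def Rop (g : Z d → ℝ) (z : Z d) : ℝ := ∫ v : E d, g (z.1, z.2.1, v) * Real.sqrt (gaussμ d v)

/-- The collision operator `U[g] = Δ_v g + (d/2 − |v|²/4) g`. -/
def Uop (g : Z d → ℝ) (z : Z d) : ℝ :=
  (∑ i, pvv g i i z) + ((d : ℝ) / 2 - ‖z.2.2‖ ^ 2 / 4) * g z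

/-- `ℤ^d`-periodicity in the space variable. -/
def ZdPeriodic (g : Z d → ℝ) : Prop :=
  ∀ (z : Z d) (i : Fin d), g (z.1, z.2.1 + EuclideanSpace.single i (1 : ℝ), z.2.2) = g z


open Filter Topology

lemma aux_sqrt (d : ℕ) : ∃ c : ℝ, 0 < c ∧ ∀ v : E d,
    Real.sqrt (gaussμ d v) = c * Real.exp (-‖v‖ ^ 2 / 4) := by
  refine ⟨Real.sqrt ((2 * π) ^ (-(d : ℝ) / 2)), by positivity, fun v => ?_⟩
  unfold gaussμ
  rw [Real.sqrt_mul (by positivity), Real.sqrt_eq_rpow (Real.exp _), ← Real.exp_mul]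
  congr 2
  ring

lemma aux_int (d : ℕ) (b : ℝ) (hb : 0 < b) :
    Integrable (fun v : E d => Real.exp (-b * ‖v‖ ^ 2)) ∧
    0 < ∫ v : E d, Real.exp (-b * ‖v‖ ^ 2) := by
  have h : 0 < ∫ v : E d, Real.exp (-b * ‖v‖ ^ 2) := by
    rw [GaussianFourier.integral_rexp_neg_mul_sq_norm hb]
    positivity
  refine ⟨?_, h⟩
  by_contra hc
  rw [integral_undef hc] at h
  exact lt_irrefl _ h

lemma aux_per {d : ℕ} (g : Z d → ℝ) (hper : ZdPeriodic g) (x : E d) :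
    ∃ y : E d, ‖y‖ ≤ Real.sqrt d ∧ ∀ t v, g (t, y, v) = g (t, x, v) := by
  have key : ∀ S : Finset (Fin d), ∃ y : E d, (∀ i ∈ S, 0 ≤ y i ∧ y i ≤ 1) ∧
      ∀ t v, g (t, y, v) = g (t, x, v) := by
    intro S
    induction S using Finset.induction_on with
    | empty => exact ⟨x, by simp, fun _ _ => rfl⟩
    | insert a S ha ih =>
      obtain ⟨y, hy, hg⟩ := ih
      refine ⟨y - ⌊y a⌋ • EuclideanSpace.single a (1 : ℝ), ?_, ?_⟩
      · intro i hi
        by_cases hia : i = a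
        · subst hia
          simp only [PiLp.sub_apply, PiLp.smul_apply, PiLp.single_apply, if_true,
            zsmul_eq_mul, mul_one]
          exact ⟨by linarith [Int.floor_le (y i)], by linarith [Int.lt_floor_add_one (y i)]⟩
        · have := hy i ((Finset.mem_insert.1 hi).resolve_left hia)
          simpa [PiLp.single_apply, hia] using this
      · intro t v
        have hp : Function.Periodic (fun x' : E d => g (t, x', v))
            (EuclideanSpace.single a (1 : ℝ)) := fun x' => hper (t, x', v) a
        rw [← hg t v]
        exact hp.sub_zsmul_eq ⌊y a⌋
  obtain ⟨y, hy, hg⟩ := key Finset.univ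
  refine ⟨y, ?_, hg⟩
  rw [EuclideanSpace.norm_eq]
  apply Real.sqrt_le_sqrt
  calc ∑ i, ‖y i‖ ^ 2 ≤ ∑ i : Fin d, (1 : ℝ) := by
        apply Finset.sum_le_sum
        intro i _
        have := hy i (Finset.mem_univ i)
        rw [Real.norm_eq_abs, sq_abs]
        nlinarith
    _ = d := by simp

lemma aux_second (f : ℝ → ℝ) (hc : ContinuousAt f 0) (hm : IsLocalMin f 0) :
    0 ≤ deriv (deriv f) 0 := by
  by_contra hneg
  push Not at hneg
  have hM := isLocalMax_of_deriv_deriv_neg hneg hm.deriv_eq_zero hc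
  have he : f =ᶠ[𝓝 0] fun _ => f 0 := by
    filter_upwards [hm, hM] with x h1 h2
    exact le_antisymm h2 h1
  have h2 := he.deriv.deriv_eq
  simp at h2
  linarith

lemma aux_left (f : ℝ → ℝ) (f' a : ℝ) (ha : 0 < a) (hf : HasDerivAt f f' a)
    (hm : ∀ s, 0 < s → s < a → f a ≤ f s) : f' ≤ 0 := by
  have ht : Tendsto (slope f a) (𝓝[<] a) (𝓝 f') :=
    (hasDerivAt_iff_tendsto_slope.1 hf).mono_left
      (nhdsWithin_mono _ (fun x hx => ne_of_lt hx))
  refine le_of_tendsto ht ?_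
  filter_upwards [Ioo_mem_nhdsLT ha] with s hs
  rw [slope_def_field]
  exact div_nonpos_of_nonneg_of_nonpos (by linarith [hm s hs.1 hs.2]) (by linarith [hs.2])

lemma aux_gauss_line {d : ℕ} (c : ℝ) (v : E d) (i : Fin d) :
    deriv (fun τ : ℝ => c * Real.exp (-‖v + τ • EuclideanSpace.single i (1 : ℝ)‖ ^ 2 / 4))
      = (fun τ : ℝ => -(v i + τ) / 2 *
        (c * Real.exp (-‖v + τ • EuclideanSpace.single i (1 : ℝ)‖ ^ 2 / 4))) ∧
    Differentiable ℝ
      (fun τ : ℝ => c * Real.exp (-‖v + τ • EuclideanSpace.single i (1 : ℝ)‖ ^ 2 / 4)) ∧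
    HasDerivAt (fun τ : ℝ => -(v i + τ) / 2 *
        (c * Real.exp (-‖v + τ • EuclideanSpace.single i (1 : ℝ)‖ ^ 2 / 4)))
      (((v i) ^ 2 / 4 - 1 / 2) * (c * Real.exp (-‖v‖ ^ 2 / 4))) 0 := by
  have hn : ∀ τ : ℝ, ‖v + τ • EuclideanSpace.single i (1 : ℝ)‖ ^ 2
      = ‖v‖ ^ 2 + 2 * τ * v i + τ ^ 2 := by
    intro τ
    rw [norm_add_sq_real, inner_smul_right, norm_smul]
    simp [EuclideanSpace.inner_single_right]
    ring
  have hd : ∀ τ : ℝ, HasDerivAt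
      (fun τ : ℝ => c * Real.exp (-‖v + τ • EuclideanSpace.single i (1 : ℝ)‖ ^ 2 / 4))
      (-(v i + τ) / 2 *
        (c * Real.exp (-‖v + τ • EuclideanSpace.single i (1 : ℝ)‖ ^ 2 / 4))) τ := by
    intro τ
    simp only [hn]
    have h1 : HasDerivAt (fun τ : ℝ => -(‖v‖ ^ 2 + 2 * τ * v i + τ ^ 2) / 4)
        (-(v i + τ) / 2) τ := by
      have h2 := ((((((hasDerivAt_id τ).const_mul 2).mul_const (v i)).const_add
        (‖v‖ ^ 2)).add ((hasDerivAt_id τ).pow 2)).neg).div_const 4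
      refine h2.congr_deriv ?_
      simp
      ring
    refine (h1.exp.const_mul c).congr_deriv ?_
    ring
  refine ⟨funext fun τ => (hd τ).deriv, fun τ => (hd τ).differentiableAt, ?_⟩
  have h1 : HasDerivAt (fun τ : ℝ => -(v i + τ) / 2) (-1 / 2) 0 := by
    simpa using (((hasDerivAt_id (0 : ℝ)).const_add (v i)).neg).div_const 2
  refine (h1.mul (hd 0)).congr_deriv ?_
  simp
  ring

lemma aux_far (C ε : ℝ) (hε : 0 < ε) :
    ∃ ρ : ℝ, ∀ r, ρ ≤ r → C * Real.exp (-r ^ 2 / 8) < ε := by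
  have h : Tendsto (fun r : ℝ => C * Real.exp (-r ^ 2 / 8)) atTop (𝓝 (C * 0)) := by
    apply Tendsto.const_mul
    apply Real.tendsto_exp_atBot.comp
    have : Tendsto (fun r : ℝ => r ^ 2 / 8) atTop atTop :=
      (tendsto_pow_atTop two_ne_zero).atTop_div_const (by norm_num)
    simpa [neg_div, Function.comp_def] using tendsto_neg_atTop_atBot.comp this
  rw [mul_zero] at h
  exact eventually_atTop.1 (h.eventually_lt_const hε)

lemma aux_core (d : ℕ) (T : ℝ) (g : Z d → ℝ)
    (hper : ZdPeriodic g)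
    (hcont : ContinuousOn g {z : Z d | 0 ≤ z.1 ∧ z.1 ≤ T})
    (hreg : KinReg g {z : Z d | 0 < z.1 ∧ z.1 < T})
    (hpde : ∀ z : Z d, 0 < z.1 → z.1 < T → Yop g z = Rop g z * Uop g z)
    (C₃ : ℝ) (hdec : ∀ z : Z d, 0 ≤ z.1 → z.1 ≤ T → |g z| ≤ C₃ * Real.exp (-‖z.2.2‖ ^ 2 / 8))
    (c : ℝ) (hc : 0 < c) (s : ℝ) (hs : s = 1 ∨ s = -1) (C ε K : ℝ) (hε : 0 < ε) (hK : 0 ≤ K)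
    (hR : ∀ t x v, 0 < t → t < T →
      (∀ x' v', 0 ≤ s * (g (t, x', v') - C * (c * Real.exp (-‖v'‖ ^ 2 / 4)))
        + ε * Real.exp (K * t)) → 0 ≤ Rop g (t, x, v) ∧ Rop g (t, x, v) * (d / 2) < K)
    (hinit : ∀ x v, 0 ≤ s * (g (0, x, v) - C * (c * Real.exp (-‖v‖ ^ 2 / 4))))
    (t : ℝ) (x v : E d) (ht0 : 0 ≤ t) (htT : t < T) :
    0 < s * (g (t, x, v) - C * (c * Real.exp (-‖v‖ ^ 2 / 4))) + ε * Real.exp (K * t) := by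
  by_contra hneg
  push Not at hneg
  set h : Z d → ℝ := fun z => s * (g z - C * (c * Real.exp (-‖z.2.2‖ ^ 2 / 4)))
    + ε * Real.exp (K * z.1) with hh
  have habs : |s| = 1 := by rcases hs with rfl | rfl <;> simp
  have hs2 : s * s = 1 := by rcases hs with rfl | rfl <;> simp
  obtain ⟨ρ, hρ⟩ := aux_far (C₃ + |C| * c) ε hε
  -- positivity far away
  have hfar : ∀ z : Z d, 0 ≤ z.1 → z.1 ≤ T → h z ≤ 0 → ‖z.2.2‖ ≤ ρ := by
    intro z hz0 hzT hz
    by_contra hlt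
    push Not at hlt
    have h1 := hρ ‖z.2.2‖ hlt.le
    have h2 := hdec z hz0 hzT
    have h3 : Real.exp (-‖z.2.2‖ ^ 2 / 4) ≤ Real.exp (-‖z.2.2‖ ^ 2 / 8) := by
      apply Real.exp_le_exp.2
      nlinarith [sq_nonneg ‖z.2.2‖]
    have h4 : 1 ≤ Real.exp (K * z.1) := Real.one_le_exp (by positivity)
    have h5 : |s * (g z - C * (c * Real.exp (-‖z.2.2‖ ^ 2 / 4)))|
        ≤ |g z| + |C| * (c * Real.exp (-‖z.2.2‖ ^ 2 / 4)) := by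
      rw [abs_mul, habs, one_mul]
      refine (abs_sub _ _).trans ?_
      rw [abs_mul C, abs_of_pos (show 0 < c * Real.exp (-‖z.2.2‖ ^ 2 / 4) by positivity)]
    have h6 : |C| * (c * Real.exp (-‖z.2.2‖ ^ 2 / 4))
        ≤ |C| * (c * Real.exp (-‖z.2.2‖ ^ 2 / 8)) := by gcongr
    have h7 := (abs_le.1 h5).1
    have h8 : ε ≤ ε * Real.exp (K * z.1) := le_mul_of_one_le_right hε.le h4
    simp only [hh] at hz
    nlinarith
  have hhc : ContinuousOn h {z : Z d | 0 ≤ z.1 ∧ z.1 ≤ T} := by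
    apply ContinuousOn.add
    · apply ContinuousOn.mul continuousOn_const
      apply hcont.sub
      apply Continuous.continuousOn
      fun_prop
    · apply Continuous.continuousOn
      fun_prop
  -- the compact set
  set B : Set (Z d) := Set.Icc 0 t ×ˢ (Metric.closedBall 0 (Real.sqrt d) ×ˢ
    Metric.closedBall 0 ρ) with hB
  have hBc : IsCompact B :=
    isCompact_Icc.prod ((isCompact_closedBall _ _).prod (isCompact_closedBall _ _))
  have hBsub : B ⊆ {z : Z d | 0 ≤ z.1 ∧ z.1 ≤ T} := fun z hz =>
    ⟨hz.1.1, hz.1.2.trans htT.le⟩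
  have hKc : IsCompact (B ∩ h ⁻¹' Set.Iic 0) := by
    have := (hhc.mono hBsub).preimage_isClosed_of_isClosed hBc.isClosed
      (isClosed_Iic (a := (0 : ℝ)))
    exact hBc.of_isClosed_subset this Set.inter_subset_left
  have hred : ∀ t' x' v', 0 ≤ t' → t' ≤ t → h (t', x', v') ≤ 0 →
      ∃ y, (t', y, v') ∈ B ∩ h ⁻¹' Set.Iic 0 := by
    intro t' x' v' h0 h1 hle
    obtain ⟨y, hy, hgy⟩ := aux_per g hper x'
    refine ⟨y, ⟨⟨⟨h0, h1⟩, ?_, ?_⟩, ?_⟩⟩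
    · simpa using hy
    · simpa using hfar _ h0 (h1.trans htT.le) hle
    · simpa [hh, hgy] using hle
  have hne : (B ∩ h ⁻¹' Set.Iic 0).Nonempty := by
    obtain ⟨y, hy⟩ := hred t x v ht0 le_rfl hneg
    exact ⟨_, hy⟩
  obtain ⟨⟨t0, x0, v0⟩, hz0, hmin⟩ := hKc.exists_isMinOn hne continuous_fst.continuousOn
  have ht00 : 0 ≤ t0 := hz0.1.1.1
  have ht0t : t0 ≤ t := hz0.1.1.2
  have hz0le : h (t0, x0, v0) ≤ 0 := hz0.2
  have hbefore : ∀ t' x' v', 0 ≤ t' → t' < t0 → 0 < h (t', x', v') := by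
    intro t' x' v' h0 h1
    by_contra hcon
    push Not at hcon
    obtain ⟨y, hy⟩ := hred t' x' v' h0 (h1.le.trans ht0t) hcon
    have := hmin hy
    simp at this
    linarith
  have ht0pos : 0 < t0 := by
    rcases ht00.eq_or_lt with h0 | h0
    · exfalso
      subst h0
      have := hinit x0 v0
      simp only [hh, mul_zero, Real.exp_zero, mul_one] at hz0le
      linarith
    · exact h0
  have ht0T : t0 < T := ht0t.trans_lt htT
  have hall : ∀ x' v', 0 ≤ h (t0, x', v') := by
    intro x' v'
    have hct : ContinuousOn (fun τ : ℝ => h (τ, x', v')) (Set.Icc 0 T) :=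
      hhc.comp (by fun_prop) (fun τ hτ => hτ)
    have hct0 : ContinuousAt (fun τ : ℝ => h (τ, x', v')) t0 :=
      hct.continuousAt (Icc_mem_nhds ht0pos ht0T)
    refine ge_of_tendsto (hct0.tendsto.mono_left (nhdsWithin_le_nhds (s := Set.Iio t0))) ?_
    filter_upwards [Ioo_mem_nhdsLT ht0pos] with τ hτ
    exact (hbefore τ x' v' hτ.1.le hτ.2).le
  have hz0eq : h (t0, x0, v0) = 0 := le_antisymm hz0le (hall x0 v0)
  have hmem : ((t0, x0, v0) : Z d) ∈ {z : Z d | 0 < z.1 ∧ z.1 < T} := ⟨ht0pos, ht0T⟩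
  -- time derivative
  have hpt : s * pt g (t0, x0, v0) + ε * (K * Real.exp (K * t0)) ≤ 0 := by
    refine aux_left (fun τ => h (τ, x0, v0)) _ t0 ht0pos ?_ ?_
    · have h1 : HasDerivAt (fun τ => g (τ, x0, v0)) (pt g (t0, x0, v0)) t0 :=
        (hreg.dt _ hmem).hasDerivAt
      have h2 : HasDerivAt (fun τ => Real.exp (K * τ)) (K * Real.exp (K * t0)) t0 := by
        refine (((hasDerivAt_id t0).const_mul K).exp).congr_deriv ?_
        simp
        ring
      exact ((h1.sub_const (C * (c * Real.exp (-‖v0‖ ^ 2 / 4)))).const_mul s).add (h2.const_mul ε)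
    · intro τ hτ0 hτ
      simp only [hz0eq]
      exact (hbefore τ x0 v0 hτ0.le hτ).le
  -- space derivative
  have hpx : ∀ i, px g i (t0, x0, v0) = 0 := by
    intro i
    have h1 : HasDerivAt
        (fun τ : ℝ => g (t0, x0 + τ • EuclideanSpace.single i (1 : ℝ), v0))
        (px g i (t0, x0, v0)) 0 := (hreg.dx _ hmem i).hasDerivAt
    have h2 : HasDerivAt
        (fun τ : ℝ => h (t0, x0 + τ • EuclideanSpace.single i (1 : ℝ), v0))
        (s * px g i (t0, x0, v0)) 0 :=
      ((h1.sub_const (C * (c * Real.exp (-‖v0‖ ^ 2 / 4)))).const_mul s).add_const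
        (ε * Real.exp (K * t0))
    have h3 : IsLocalMin
        (fun τ : ℝ => h (t0, x0 + τ • EuclideanSpace.single i (1 : ℝ), v0)) 0 := by
      refine Eventually.of_forall fun τ => ?_
      simp only [zero_smul, add_zero, hz0eq]
      exact hall _ _
    have h4 := h3.hasDerivAt_eq_zero h2
    rcases hs with rfl | rfl <;> linarith
  -- second velocity derivatives
  have hpvv : ∀ i, 0 ≤ s * (pvv g i i (t0, x0, v0)
      - C * (((v0 i) ^ 2 / 4 - 1 / 2) * (c * Real.exp (-‖v0‖ ^ 2 / 4)))) := by
    intro i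
    obtain ⟨m1, m2, m3⟩ := aux_gauss_line c v0 i
    have hg1 : ∀ τ : ℝ, HasDerivAt
        (fun τ : ℝ => g (t0, x0, v0 + τ • EuclideanSpace.single i (1 : ℝ)))
        (pv g i (t0, x0, v0 + τ • EuclideanSpace.single i (1 : ℝ))) τ := by
      intro τ
      have h1 : HasDerivAt (fun σ : ℝ => g (t0, x0,
          (v0 + τ • EuclideanSpace.single i (1 : ℝ)) + σ • EuclideanSpace.single i (1 : ℝ)))
          (pv g i (t0, x0, v0 + τ • EuclideanSpace.single i (1 : ℝ))) 0 :=
        (hreg.dv (t0, x0, v0 + τ • EuclideanSpace.single i (1 : ℝ)) hmem i).hasDerivAt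
      have h2 := HasDerivAt.comp_sub_const (x := τ) (a := τ) (by simpa using h1)
      refine h2.congr_of_eventuallyEq (Eventually.of_forall fun σ => ?_)
      simp only [add_assoc, ← add_smul]
      simp
    have hg2 : HasDerivAt
        (fun τ : ℝ => pv g i (t0, x0, v0 + τ • EuclideanSpace.single i (1 : ℝ)))
        (pvv g i i (t0, x0, v0)) 0 := (hreg.dvv _ hmem i i).hasDerivAt
    have hh1 : ∀ τ : ℝ, HasDerivAt
        (fun τ : ℝ => h (t0, x0, v0 + τ • EuclideanSpace.single i (1 : ℝ)))
        (s * (pv g i (t0, x0, v0 + τ • EuclideanSpace.single i (1 : ℝ)) - C * (-(v0 i + τ) / 2 *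
        (c * Real.exp (-‖v0 + τ • EuclideanSpace.single i (1 : ℝ)‖ ^ 2 / 4))))) τ := by
      intro τ
      have hm := (m2 τ).hasDerivAt
      rw [m1] at hm
      exact (((hg1 τ).sub (hm.const_mul C)).const_mul s).add_const (ε * Real.exp (K * t0))
    have hdd := aux_second
      (fun τ : ℝ => h (t0, x0, v0 + τ • EuclideanSpace.single i (1 : ℝ)))
      (hh1 0).continuousAt (by
        refine Eventually.of_forall fun τ => ?_
        simp only [zero_smul, add_zero, hz0eq]
        exact hall _ _)
    rw [show deriv (fun τ : ℝ => h (t0, x0, v0 + τ • EuclideanSpace.single i (1 : ℝ))) = _ from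
      funext fun τ => (hh1 τ).deriv] at hdd
    exact hdd.trans_eq ((hg2.sub (m3.const_mul C)).const_mul s).deriv
  have hsum : 0 ≤ s * ((∑ i, pvv g i i (t0, x0, v0))
      - C * ((‖v0‖ ^ 2 / 4 - d / 2) * (c * Real.exp (-‖v0‖ ^ 2 / 4)))) := by
    have h1 := Finset.sum_nonneg (fun i (_ : i ∈ Finset.univ) => hpvv i)
    rw [← Finset.mul_sum, Finset.sum_sub_distrib, ← Finset.mul_sum, ← Finset.sum_mul,
      Finset.sum_sub_distrib, ← Finset.sum_div, ← EuclideanSpace.real_norm_sq_eq] at h1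
    simp only [Finset.sum_const, Finset.card_univ, Fintype.card_fin, nsmul_eq_mul] at h1
    refine h1.trans_eq ?_
    ring
  obtain ⟨hR0, hRK⟩ := hR t0 x0 v0 ht0pos ht0T hall
  have hp := hpde (t0, x0, v0) ht0pos ht0T
  have hY : Yop g (t0, x0, v0) = pt g (t0, x0, v0) := by
    simp [Yop, hpx]
  rw [hY] at hp
  set R := Rop g (t0, x0, v0)
  set e := ε * Real.exp (K * t0) with he
  have hepos : 0 < e := by positivity
  have hsg : s * (g (t0, x0, v0) - C * (c * Real.exp (-‖v0‖ ^ 2 / 4))) = -e := by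
    simp only [hh] at hz0eq
    linarith
  have hU : -(d / 2 * e) ≤ s * Uop g (t0, x0, v0) := by
    have : s * Uop g (t0, x0, v0) = s * ((∑ i, pvv g i i (t0, x0, v0))
        - C * ((‖v0‖ ^ 2 / 4 - d / 2) * (c * Real.exp (-‖v0‖ ^ 2 / 4))))
        + (d / 2 - ‖v0‖ ^ 2 / 4) *
          (s * (g (t0, x0, v0) - C * (c * Real.exp (-‖v0‖ ^ 2 / 4)))) := by
      simp only [Uop]
      ring
    rw [this, hsg]
    nlinarith [mul_nonneg (sq_nonneg ‖v0‖) hepos.le]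
  have h1 : R * -(d / 2 * e) ≤ R * (s * Uop g (t0, x0, v0)) :=
    mul_le_mul_of_nonneg_left hU hR0
  have h2 : s * pt g (t0, x0, v0) = R * (s * Uop g (t0, x0, v0)) := by rw [hp]; ring
  have h3 : R * (d / 2) * e < K * e := mul_lt_mul_of_pos_right hRK hepos
  have h4 : ε * (K * Real.exp (K * t0)) = K * e := by rw [he]; ring
  rw [h2, h4] at hpt
  linarith

lemma aux_close (d : ℕ) (T : ℝ) (hT : 0 < T) (g : Z d → ℝ)
    (hcont : ContinuousOn g {z : Z d | 0 ≤ z.1 ∧ z.1 ≤ T})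
    (c s C ε₀ K : ℝ) (hε₀ : 0 < ε₀)
    (H : ∀ ε, 0 < ε → ε ≤ ε₀ → ∀ t x v, 0 ≤ t → t < T →
      0 < s * (g (t, x, v) - C * (c * Real.exp (-‖v‖ ^ 2 / 4))) + ε * Real.exp (K * t))
    (t : ℝ) (x v : E d) (ht0 : 0 ≤ t) (htT : t ≤ T) :
    0 ≤ s * (g (t, x, v) - C * (c * Real.exp (-‖v‖ ^ 2 / 4))) := by
  have h1 : ∀ t, 0 ≤ t → t < T →
      0 ≤ s * (g (t, x, v) - C * (c * Real.exp (-‖v‖ ^ 2 / 4))) := by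
    intro t ht0 htT
    by_contra hneg
    push Not at hneg
    set w := s * (g (t, x, v) - C * (c * Real.exp (-‖v‖ ^ 2 / 4))) with hw
    have he : 0 < Real.exp (K * t) := Real.exp_pos _
    have hq : 0 < -w / (2 * Real.exp (K * t)) := div_pos (by linarith) (by positivity)
    have := H (min ε₀ (-w / (2 * Real.exp (K * t)))) (lt_min hε₀ hq) (min_le_left _ _)
      t x v ht0 htT
    have h2 : min ε₀ (-w / (2 * Real.exp (K * t))) * Real.exp (K * t) ≤ -w / 2 := by
      calc _ ≤ (-w / (2 * Real.exp (K * t))) * Real.exp (K * t) := by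
            gcongr
            exact min_le_right _ _
        _ = -w / 2 := by field_simp
    linarith
  rcases htT.lt_or_eq with hlt | heq
  · exact h1 t ht0 hlt
  · subst heq
    have hct : ContinuousOn
        (fun τ : ℝ => s * (g (τ, x, v) - C * (c * Real.exp (-‖v‖ ^ 2 / 4)))) (Set.Icc 0 t) := by
      have : ContinuousOn (fun τ : ℝ => g (τ, x, v)) (Set.Icc 0 t) :=
        hcont.comp (by fun_prop) (fun τ hτ => hτ)
      exact continuousOn_const.mul (this.sub continuousOn_const)
    have h2 : Tendsto (fun τ : ℝ => s * (g (τ, x, v) - C * (c * Real.exp (-‖v‖ ^ 2 / 4))))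
        (𝓝[<] t) (𝓝 (s * (g (t, x, v) - C * (c * Real.exp (-‖v‖ ^ 2 / 4))))) := by
      have h3 := (hct t ⟨ht0, le_rfl⟩).tendsto
      refine h3.mono_left ?_
      rw [← nhdsWithin_Ioo_eq_nhdsLT hT]
      exact nhdsWithin_mono _ Set.Ioo_subset_Icc_self
    refine ge_of_tendsto h2 ?_
    filter_upwards [Ioo_mem_nhdsLT hT] with τ hτ
    exact h1 τ hτ.1.le hτ.2

/-- **Gaussian bounds for the toy model**: if a solution of
`∂_t g + v·∇_x g = ℛ[g] U[g]` on `[0,T]` (with Gaussian decay of `g` and its first two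
derivatives) satisfies `C₁√μ ≤ g(0,·,·) ≤ C₂√μ`, then `C₁√μ ≤ g(t,·,·) ≤ C₂√μ` for all
`t ∈ [0,T]`. -/
theorem toy_model_gaussian_bounds
    (d : ℕ) (hd : 1 ≤ d) (T C₁ C₂ : ℝ) (hT : 0 < T) (h1 : 0 < C₁) (h12 : C₁ ≤ C₂)
    (g : Z d → ℝ)
    (hper : ZdPeriodic g)
    (hcont : ContinuousOn g {z : Z d | 0 ≤ z.1 ∧ z.1 ≤ T})
    (hreg : KinReg g {z : Z d | 0 < z.1 ∧ z.1 < T})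
    (hpde : ∀ z : Z d, 0 < z.1 → z.1 < T → Yop g z = Rop g z * Uop g z)
    (hdecay : ∃ C₃ : ℝ, 0 < C₃ ∧ ∀ z : Z d, 0 ≤ z.1 → z.1 ≤ T →
      |g z| + gradvNorm g z + hessvNorm g z + Real.sqrt (∑ i, (px g i z) ^ 2)
        ≤ C₃ * Real.exp (-‖z.2.2‖ ^ 2 / 8))
    (hinit : ∀ x v : E d, C₁ * Real.sqrt (gaussμ d v) ≤ g (0, x, v) ∧
      g (0, x, v) ≤ C₂ * Real.sqrt (gaussμ d v)) :
    ∀ z : Z d, 0 ≤ z.1 → z.1 ≤ T →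
      C₁ * Real.sqrt (gaussμ d z.2.2) ≤ g z ∧ g z ≤ C₂ * Real.sqrt (gaussμ d z.2.2) := by
  obtain ⟨C₃, hC₃, hdecay⟩ := hdecay
  obtain ⟨c, hc, hm⟩ := aux_sqrt d
  have hdec : ∀ z : Z d, 0 ≤ z.1 → z.1 ≤ T → |g z| ≤ C₃ * Real.exp (-‖z.2.2‖ ^ 2 / 8) := by
    intro z h0 hz
    refine le_trans ?_ (hdecay z h0 hz)
    have ha : 0 ≤ gradvNorm g z := Real.sqrt_nonneg _
    have hb : 0 ≤ hessvNorm g z := Real.sqrt_nonneg _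
    have hc := Real.sqrt_nonneg (∑ i, (px g i z) ^ 2)
    linarith
  obtain ⟨hI, hIpos⟩ := aux_int d (1 / 4) (by norm_num)
  obtain ⟨hA, hApos⟩ := aux_int d (1 / 2) (by norm_num)
  set I := ∫ v : E d, Real.exp (-(1 / 4) * ‖v‖ ^ 2) with hIdef
  set A := ∫ v : E d, Real.exp (-(1 / 2) * ‖v‖ ^ 2) with hAdef
  have hm4 : ∀ v : E d, Real.exp (-‖v‖ ^ 2 / 4) = Real.exp (-(1 / 4) * ‖v‖ ^ 2) := by
    intro v
    congr 1
    ring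
  have hm2 : ∀ v : E d, Real.exp (-(1 / 4) * ‖v‖ ^ 2) * Real.exp (-(1 / 4) * ‖v‖ ^ 2)
      = Real.exp (-(1 / 2) * ‖v‖ ^ 2) := by
    intro v
    rw [← Real.exp_add]
    congr 1
    ring
  have hRle : ∀ t x v, 0 ≤ t → t ≤ T → Rop g (t, x, v) ≤ C₃ * c * I := by
    intro t x v h0 hT'
    have h2 : ‖Rop g (t, x, v)‖ ≤ ∫ v : E d, C₃ * c * Real.exp (-(1 / 4) * ‖v‖ ^ 2) := by
      refine norm_integral_le_of_norm_le (hI.const_mul _) (Eventually.of_forall fun w => ?_)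
      rw [hm, hm4, norm_mul, Real.norm_eq_abs,
        Real.norm_of_nonneg (show 0 ≤ c * Real.exp (-(1 / 4) * ‖w‖ ^ 2) by positivity)]
      have h3 : |g (t, x, w)| ≤ C₃ := by
        refine (hdec (t, x, w) h0 hT').trans ?_
        have : Real.exp (-‖w‖ ^ 2 / 8) ≤ 1 := Real.exp_le_one_iff.2 (by nlinarith [sq_nonneg ‖w‖])
        nlinarith
      rw [mul_assoc]
      gcongr
    rw [integral_const_mul] at h2
    exact (le_abs_self _).trans h2
  set K := C₃ * c * I * (d / 2) + 1 with hK
  have hK0 : 0 ≤ K := by positivity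
  have hRK : ∀ t x v, 0 ≤ t → t ≤ T → Rop g (t, x, v) * (d / 2) < K := by
    intro t x v h0 hT'
    have := mul_le_mul_of_nonneg_right (hRle t x v h0 hT') (show (0 : ℝ) ≤ d / 2 by positivity)
    linarith
  have hlow : ∀ t x v, 0 ≤ t → t ≤ T →
      0 ≤ (1 : ℝ) * (g (t, x, v) - C₁ * (c * Real.exp (-‖v‖ ^ 2 / 4))) := by
    refine fun t x v => aux_close d T hT g hcont c 1 C₁ (C₁ * c * A / (I * Real.exp (K * T))) K
      (by positivity) ?_ t x v
    intro ε hε hεle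
    refine aux_core d T g hper hcont hreg hpde C₃ hdec c hc 1 (Or.inl rfl) C₁ ε K hε hK0 ?_ ?_
    · intro t x v h0 hT' hpos
      refine ⟨?_, hRK t x v h0.le hT'.le⟩
      by_cases hint : Integrable (fun w : E d => g (t, x, w) * Real.sqrt (gaussμ d w))
      · set δ := ε * Real.exp (K * t) with hδ
        have hδle : δ * I ≤ C₁ * c * A := by
          rw [le_div_iff₀ (by positivity)] at hεle
          have : Real.exp (K * t) ≤ Real.exp (K * T) := by
            apply Real.exp_le_exp.2
            gcongr
          calc δ * I ≤ ε * Real.exp (K * T) * I := by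
                rw [hδ]
                gcongr
            _ = ε * (I * Real.exp (K * T)) := by ring
            _ ≤ _ := hεle
        have hle : ∫ w : E d, (C₁ * c * c * Real.exp (-(1 / 2) * ‖w‖ ^ 2)
            - δ * c * Real.exp (-(1 / 4) * ‖w‖ ^ 2)) ≤ Rop g (t, x, v) := by
          refine integral_mono ((hA.const_mul _).sub (hI.const_mul _)) hint fun w => ?_
          have h3 := hpos x w
          rw [hm4] at h3
          simp only [hm, hm4, ← hm2]
          have h4 : 0 ≤ c * Real.exp (-(1 / 4) * ‖w‖ ^ 2) := by positivity
          nlinarith [mul_nonneg h3 h4]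
        rw [integral_sub (hA.const_mul _) (hI.const_mul _), integral_const_mul,
          integral_const_mul] at hle
        refine le_trans ?_ hle
        have := mul_le_mul_of_nonneg_right hδle hc.le
        nlinarith
      · exact (integral_undef hint).ge
    · intro x v
      have := (hinit x v).1
      rw [hm] at this
      linarith
  have hup : ∀ t x v, 0 ≤ t → t ≤ T →
      0 ≤ (-1 : ℝ) * (g (t, x, v) - C₂ * (c * Real.exp (-‖v‖ ^ 2 / 4))) := by
    refine fun t x v => aux_close d T hT g hcont c (-1) C₂ 1 K one_pos ?_ t x v
    intro ε hε _
    refine aux_core d T g hper hcont hreg hpde C₃ hdec c hc (-1) (Or.inr rfl) C₂ ε K hε hK0 ?_ ?_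
    · intro t x v h0 hT' _
      refine ⟨integral_nonneg fun w => ?_, hRK t x v h0.le hT'.le⟩
      have h3 := hlow t x w h0.le hT'.le
      have h4 : 0 ≤ C₁ * (c * Real.exp (-‖w‖ ^ 2 / 4)) := by positivity
      exact mul_nonneg (by linarith) (Real.sqrt_nonneg _)
    · intro x v
      have := (hinit x v).2
      rw [hm] at this
      linarith
  rintro ⟨t, x, v⟩ h0 hT'
  have ha := hlow t x v h0 hT'
  have hb := hup t x v h0 hT'
  simp only [hm]
  exact ⟨by linarith, by linarith⟩
end
end

section
/- Let d ≥ 1, let k be a positive integer with k ≥ d/2, and let m̄, m ∈ ℕ^d be multi-indices with |m̄| + |m| = k. (a) There exists C depending only on k and d such that for all ℤ^d-periodic smooth functions g₁, g₂ : ℝ^d → ℝ, ‖(∂^m̄ g₁)(∂^m g₂)‖_{L²} ≤ C (‖g₁‖_{L^∞} ‖g₂‖_{H^k} + ‖g₁‖_{H^k} ‖g₂‖_{L^∞}). (b) If moreover m̄ ≠ 0, then for every ε > 0 there exists C_ε, depending only on ε, k and d, such that for all such g₁, g₂: ‖(∂^m̄ g₁)(∂^m g₂)‖_{L²} ≤ ε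 ‖g₁‖_{L^∞} ‖g₂‖_{H^k} + C_ε ‖g₁‖_{H^k} ‖g₂‖_{L^∞}. -/
open Real MeasureTheory
open scoped BigOperators ENNReal

noncomputable section

variable {d : ℕ}

/-- Partial derivative in the direction `i`. -/
def pD (i : Fin d) (u : E d → ℝ) (x : E d) : ℝ :=
  deriv (fun s : ℝ => u (x + s • EuclideanSpace.single i (1 : ℝ))) 0

/-- Iterated partial derivative `∂^a` for a multi-index `a : Fin d → ℕ`. -/
def multiD (a : Fin d → ℕ) (u : E d → ℝ) : E d → ℝ :=
  ((List.ofFn fun i : Fin d => (pD i)^[a i]).foldr (· ∘ ·) id) u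

/-- The fundamental domain `[0,1)^d` of the torus. -/
def Box (d : ℕ) : Set (E d) := {x | ∀ i, 0 ≤ x i ∧ x i < 1}

/-- `ℤ^d`-periodicity. -/
def Periodic (u : E d → ℝ) : Prop :=
  ∀ (x : E d) (i : Fin d), u (x + EuclideanSpace.single i (1 : ℝ)) = u x

/-- The `L²` norm over the fundamental domain. -/
def L2Norm (u : E d → ℝ) : ℝ := Real.sqrt (∫ x in Box d, (u x) ^ 2)

/-- The `H^k` norm over the fundamental domain:
`‖u‖²_{H^k} = Σ_{|β| ≤ k} ‖∂^β u‖²_{L²}`. -/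
def HkNorm (k : ℕ) (u : E d → ℝ) : ℝ :=
  Real.sqrt (∑ β : Fin d → Fin (k + 1),
    if (∑ i, (β i : ℕ)) ≤ k then ∫ x in Box d, (multiD (fun i => (β i : ℕ)) u x) ^ 2 else 0)

/-- The sup norm. -/
def supN (u : E d → ℝ) : ℝ := ⨆ x : E d, |u x|


theorem pD_eq {u : E d → ℝ} (hu : Differentiable ℝ u) (i : Fin d) (x : E d) :
    pD i u x = fderiv ℝ u x (EuclideanSpace.single i (1 : ℝ)) := by
  unfold pD
  have h := (hu x).hasFDerivAt.hasLineDerivAt (EuclideanSpace.single i (1 : ℝ))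
  exact h.deriv

def Sm (u : E d → ℝ) : Prop := ContDiff ℝ (⊤ : ℕ∞) u

theorem Sm.diff {u : E d → ℝ} (hu : Sm u) : Differentiable ℝ u :=
  ContDiff.differentiable hu (by simp)

theorem Sm.cont {u : E d → ℝ} (hu : Sm u) : Continuous u := ContDiff.continuous hu

theorem pD_eq' {u : E d → ℝ} (hu : Sm u) (i : Fin d) :
    pD i u = fun x => fderiv ℝ u x (EuclideanSpace.single i (1 : ℝ)) :=
  funext fun x => pD_eq hu.diff i x

theorem Sm.pD {u : E d → ℝ} (hu : Sm u) (i : Fin d) : Sm (pD i u) := by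
  rw [pD_eq' hu]
  have h : ContDiff ℝ (⊤ : ℕ∞) (fderiv ℝ u) := ContDiff.fderiv_right hu (by simp)
  exact h.clm_apply contDiff_const

theorem pD_per {u : E d → ℝ} (hu : Periodic u) (i : Fin d) : Periodic (pD i u) := by
  intro x j
  unfold pD
  congr 1
  funext s
  rw [add_right_comm, hu]

theorem pD_comm {u : E d → ℝ} (hu : Sm u) (i j : Fin d) : pD i (pD j u) = pD j (pD i u) := by
  have h : ContDiff ℝ (⊤ : ℕ∞) (fderiv ℝ u) := ContDiff.fderiv_right hu (by simp)
  have hd := h.differentiable (by simp)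
  funext x
  rw [pD_eq (hu.pD j).diff, pD_eq (hu.pD i).diff, pD_eq' hu, pD_eq' hu]
  rw [fderiv_clm_apply (hd x) (by fun_prop), fderiv_clm_apply (hd x) (by fun_prop)]
  have hs : IsSymmSndFDerivAt ℝ u x := 
    (ContDiff.contDiffAt hu).isSymmSndFDerivAt (by
      simp only [minSmoothness_of_isRCLikeNormedField]; exact WithTop.coe_le_coe.2 (le_top : (2 : ℕ∞) ≤ ⊤))
  simpa using hs _ _

theorem pD_smul (c : ℝ) (u : E d → ℝ) (i : Fin d) :
    pD i (fun x => c * u x) = fun x => c * pD i u x := by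
  funext x
  unfold pD
  exact deriv_const_mul_field c

def Dl (l : List (Fin d)) (u : E d → ℝ) : E d → ℝ := l.foldr pD u

theorem Dl_cons (i : Fin d) (l : List (Fin d)) (u : E d → ℝ) : Dl (i :: l) u = pD i (Dl l u) := rfl

theorem Sm.Dl {u : E d → ℝ} (hu : Sm u) (l : List (Fin d)) : Sm (Dl l u) := by
  induction l with
  | nil => exact hu
  | cons i l ih => exact ih.pD i

theorem Dl_per {u : E d → ℝ} (hu : Periodic u) (l : List (Fin d)) : Periodic (Dl l u) := by
  induction l with
  | nil => exact hu
  | cons i l ih => exact pD_per ih i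

theorem Dl_smul (c : ℝ) (u : E d → ℝ) (l : List (Fin d)) :
    Dl l (fun x => c * u x) = fun x => c * Dl l u x := by
  induction l with
  | nil => rfl
  | cons i l ih => rw [Dl_cons, ih, pD_smul]; rfl

theorem Dl_perm {u : E d → ℝ} (hu : Sm u) {l l' : List (Fin d)} (h : l.Perm l') :
    Dl l u = Dl l' u := by
  induction h with
  | nil => rfl
  | cons i _ ih => rw [Dl_cons, ih, Dl_cons]
  | swap i j l => exact pD_comm (hu.Dl l) _ _
  | trans _ _ h1 h2 => exact h1.trans h2

def ml (a : Fin d → ℕ) : List (Fin d) := (List.finRange d).flatMap fun i => List.replicate (a i) i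

theorem multiD_eq (a : Fin d → ℕ) (u : E d → ℝ) : multiD a u = Dl (ml a) u := by
  unfold multiD ml
  rw [List.ofFn_eq_map]
  generalize List.finRange d = L
  induction L with
  | nil => rfl
  | cons i L ih =>
    simp only [List.map_cons, List.foldr_cons, Function.comp_apply, List.flatMap_cons]
    rw [ih]
    generalize a i = n
    induction n with
    | zero => rfl
    | succ n ihn => 
      rw [Function.iterate_succ_apply', ihn, List.replicate_succ]; rfl

theorem ml_length (a : Fin d → ℕ) : (ml a).length = ∑ i, a i := by
  unfold ml
  rw [List.length_flatMap]
  simp [Fin.sum_univ_def]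

theorem ml_count (a : Fin d → ℕ) (j : Fin d) : (ml a).count j = a j := by
  unfold ml
  rw [List.count_flatMap]
  have : (List.count j ∘ fun i => List.replicate (a i) i) = fun i => if i = j then a i else 0 := by
    funext i
    simp [List.count_replicate]
  rw [this, ← Fin.sum_univ_def]
  simp

theorem Dl_eq_multiD {u : E d → ℝ} (hu : Sm u) (l : List (Fin d)) :
    Dl l u = multiD (fun i => l.count i) u := by
  rw [multiD_eq]
  apply Dl_perm hu
  rw [List.perm_iff_count]
  intro a
  rw [ml_count]

theorem sum_count (l : List (Fin d)) : ∑ i, l.count i = l.length := by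
  have := ml_length (fun i => l.count i)
  rw [← this]
  apply List.Perm.length_eq
  rw [List.perm_iff_count]
  intro a
  rw [ml_count]

theorem Box_int {f : E d → ℝ} (hf : Continuous f) : IntegrableOn f (Box d) := by
  have hb : Bornology.IsBounded (Box d) := by
    have h : Box d ⊆ Metric.closedBall 0 (Real.sqrt d) := by
      intro x hx
      rw [mem_closedBall_zero_iff, EuclideanSpace.norm_eq]
      apply Real.sqrt_le_sqrt
      calc ∑ i, ‖x i‖ ^ 2 ≤ ∑ i : Fin d, (1 : ℝ) := by
            apply Finset.sum_le_sum
            intro i _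
            have := hx i
            rw [Real.norm_eq_abs, sq_abs]
            nlinarith
        _ = d := by simp
    exact Metric.isBounded_closedBall.subset h
  have hc : IsCompact (closure (Box d)) := hb.isCompact_closure
  exact (hf.continuousOn.integrableOn_compact hc).mono_set subset_closure

theorem ibp0 {F : E d → ℝ} {F' : E d → E d →L[ℝ] ℝ} (hF : ∀ x, HasFDerivAt F (F' x) x)
    (hp : Periodic F) (i : Fin d)
    (hc : Continuous fun x => F' x (EuclideanSpace.single i (1 : ℝ))) :
    ∫ x in Box d, F' x (EuclideanSpace.single i (1 : ℝ)) = 0 := by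
  obtain ⟨n, rfl⟩ : ∃ n, d = n + 1 := ⟨d - 1, by have := i.pos; omega⟩
  let T : (Fin (n+1) → ℝ) →L[ℝ] E (n+1) := (EuclideanSpace.equiv (Fin (n+1)) ℝ).symm.toContinuousLinearMap
  have hT : ∀ y, T y = WithLp.toLp 2 y := fun y => rfl
  have hmp := (EuclideanSpace.volume_preserving_symm_measurableEquiv_toLp (Fin (n+1))).symm
  have hTs : T (Pi.single i 1) = EuclideanSpace.single i (1:ℝ) := rfl
  have h1 : ∫ x in Box (n+1), F' x (EuclideanSpace.single i (1 : ℝ)) =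
      ∫ y in Set.Icc (0 : Fin (n+1) → ℝ) 1, F' (T y) (EuclideanSpace.single i (1 : ℝ)) := by
    rw [← hmp.setIntegral_preimage_emb (MeasurableEquiv.measurableEmbedding _)]
    have : ∀ᵐ y ∂(volume : Measure (Fin (n+1) → ℝ)), True := by simp
    have e : (MeasurableEquiv.toLp 2 (Fin (n+1) → ℝ)) ⁻¹' (Box (n+1)) = 
      Set.pi Set.univ fun i => Set.Ico ((0 : Fin (n+1) → ℝ) i) ((1 : Fin (n+1) → ℝ) i) := by
      ext y; simp [Box]
    have e' := (Measure.univ_pi_Ico_ae_eq_Icc (μ := fun _ : Fin (n+1) => (volume : Measure ℝ)) (f := 0) (g := 1))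
    rw [MeasurableEquiv.symm_symm, e]
    exact setIntegral_congr_set e'
  rw [h1]
  have key := integral_divergence_of_hasFDerivAt_off_countable' (E := ℝ) (n := n)
    (0 : Fin (n+1) → ℝ) 1 (by intro _; simp) 
    (fun j y => if j = i then F (T y) else 0)
    (fun j y => if j = i then (F' (T y)).comp T else 0) ∅ Set.countable_empty ?_ ?_ ?_
  · rw [← hTs]
    have e2 : ∀ y, ∑ j, (if j = i then (F' (T y)).comp T else 0) (Pi.single j 1) = F' (T y) (T (Pi.single i 1)) := by
      intro y
      rw [Finset.sum_eq_single i]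
      · simp
      · intro b _ hb; simp [hb]
      · simp
    simp only [e2] at key
    rw [key]
    apply Finset.sum_eq_zero
    intro j _
    by_cases hj : j = i
    · subst hj
      simp only [if_true]
      rw [sub_eq_zero]
      congr 1
      funext x
      have : T (j.insertNth ((1 : Fin (n+1) → ℝ) j) x) = T (j.insertNth ((0 : Fin (n+1) → ℝ) j) x) + EuclideanSpace.single j (1:ℝ) := by
        rw [← hTs, ← map_add]
        congr 1
        ext k
        refine Fin.succAboveCases j ?_ (fun k => ?_) k
        · simp
        · simp
      rw [this, hp]
    · simp [hj]
  · intro j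
    have : Continuous F := continuous_iff_continuousAt.2 fun x => (hF x).continuousAt
    split_ifs
    · exact (this.comp T.continuous).continuousOn
    · exact continuousOn_const
  · intro y _ j
    split_ifs
    · exact (hF (T y)).comp y T.hasFDerivAt
    · exact hasFDerivAt_const _ _
  · have e2 : ∀ y, ∑ j, (if j = i then (F' (T y)).comp T else 0) (Pi.single j 1) = F' (T y) (T (Pi.single i 1)) := by
      intro y
      rw [Finset.sum_eq_single i]
      · simp
      · intro b _ hb; simp [hb]
      · simp
    simp only [e2]
    rw [hTs]
    exact (hc.comp T.continuous).continuousOn.integrableOn_compact isCompact_Icc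

theorem phi_deriv {q : ℝ} (hq : 0 < q) (t : ℝ) :
    HasDerivAt (fun t : ℝ => |t| ^ q * t) ((q + 1) * |t| ^ q) t := by
  rcases eq_or_ne t 0 with rfl | ht
  · rw [hasDerivAt_iff_tendsto_slope]
    have h : Filter.Tendsto (fun s : ℝ => |s| ^ q) (nhdsWithin 0 {0}ᶜ) (nhds ((q + 1) * |(0:ℝ)| ^ q)) := by
      have hc : Continuous fun s : ℝ => |s| ^ q := continuous_abs.rpow_const fun _ => Or.inr hq.le
      have := hc.tendsto 0
      simp only [abs_zero, Real.zero_rpow hq.ne', mul_zero] at this ⊢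
      exact this.mono_left nhdsWithin_le_nhds
    refine h.congr' ?_
    filter_upwards [self_mem_nhdsWithin] with s hs
    have hs : s ≠ 0 := hs
    simp [slope_def_field, hs]
  · have h1 : HasDerivAt (fun t : ℝ => |t|) (SignType.sign t : ℝ) t := hasDerivAt_abs ht
    have h2 := (h1.rpow_const (p := q) (Or.inl (abs_ne_zero.2 ht))).mul (hasDerivAt_id t)
    refine h2.congr_deriv ?_
    have : |t| ^ (q - 1) * |t| = |t| ^ q := by
      rw [Real.rpow_sub_one (abs_ne_zero.2 ht)]
      field_simp
    simp only [id, mul_one]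
    rw [← this]
    have h3 : (SignType.sign t : ℝ) * t = |t| := sign_mul_self t
    linear_combination (q * |t| ^ (q - 1)) * h3

theorem ibp {v : E d → ℝ} (hv : Sm v) (hp : Periodic v) (i : Fin d) {q : ℝ} (hq : 0 < q) :
    ∫ x in Box d, |pD i v x| ^ (q + 2) ≤
      ∫ x in Box d, (q + 1) * (|v x| * |pD i v x| ^ q * |pD i (pD i v) x|) := by
  have hw := hv.pD i
  have hz := hw.pD i
  have hcq : Continuous fun x => |pD i v x| ^ q := hw.cont.abs.rpow_const fun _ => Or.inr hq.le
  have h := ibp0 (F := fun x => v x * (|pD i v x| ^ q * pD i v x)) (i := i)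
    (F' := fun x => v x • (((q + 1) * |pD i v x| ^ q) • fderiv ℝ (pD i v) x) + 
      (|pD i v x| ^ q * pD i v x) • fderiv ℝ v x)
    (fun x => by
      refine HasFDerivAt.mul (hv.diff x).hasFDerivAt ?_
      exact (phi_deriv hq _).comp_hasFDerivAt x (hw.diff x).hasFDerivAt)
    (fun x j => by simp only [hp x j, pD_per hp i x j])
  simp only [add_apply, smul_apply, smul_eq_mul,
    ← pD_eq hv.diff, ← pD_eq hw.diff] at h
  have c1 : Continuous fun x => v x * ((q + 1) * |pD i v x| ^ q * pD i (pD i v) x) :=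
    hv.cont.mul ((continuous_const.mul hcq).mul hz.cont)
  have c2 : Continuous fun x => |pD i v x| ^ q * pD i v x * pD i v x :=
    (hcq.mul hw.cont).mul hw.cont
  have h := h (c1.add c2)
  rw [integral_add (Box_int c1) (Box_int c2)] at h
  have e : ∀ x, |pD i v x| ^ (q + 2) = |pD i v x| ^ q * pD i v x * pD i v x := by
    intro x
    rw [Real.rpow_add_of_nonneg (abs_nonneg _) hq.le (by norm_num)]
    rw [Real.rpow_two, sq_abs]; ring
  simp only [e]
  have h3 : ∫ x in Box d, |pD i v x| ^ q * pD i v x * pD i v x = 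
     ∫ x in Box d, -(v x * ((q + 1) * |pD i v x| ^ q * pD i (pD i v) x)) := by
    rw [integral_neg]; linarith
  rw [h3]
  apply setIntegral_mono (Box_int c1.neg)
  · exact Box_int (continuous_const.mul ((hv.cont.abs.mul hcq).mul hz.cont.abs))
  · intro x
    have := neg_le_abs (v x * ((q + 1) * |pD i v x| ^ q * pD i (pD i v) x))
    refine this.trans (le_of_eq ?_)
    rw [abs_mul, abs_mul, abs_mul, abs_of_pos (by linarith : 0 < q + 1), abs_of_nonneg (Real.rpow_nonneg (abs_nonneg _) _)]
    ring

theorem young {w1 w2 w3 : ℝ} (h1 : 0 ≤ w1) (h2 : 0 ≤ w2) (h3 : 0 < w3) (hs : w1 + w2 + w3 = 1)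
    {A δ : ℝ} (hA : 0 < A) (hδ : 0 < δ) : ∃ C : ℝ, 0 < C ∧ ∀ x y z : ℝ, 0 ≤ x → 0 ≤ y → 0 ≤ z →
      A * (x ^ w1 * y ^ w2 * z ^ w3) ≤ δ * x + δ * y + C * z := by
  let B := A / (δ ^ w1 * δ ^ w2)
  have hB : 0 < B := by positivity
  refine ⟨B ^ (1 / w3), by positivity, fun x y z hx hy hz => ?_⟩
  have h := Real.geom_mean_le_arith_mean3_weighted h1 h2 h3.le (mul_nonneg hδ.le hx) (mul_nonneg hδ.le hy)
    (mul_nonneg (by positivity : 0 ≤ B ^ (1 / w3)) hz) hs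
  rw [Real.mul_rpow hδ.le hx, Real.mul_rpow hδ.le hy, Real.mul_rpow (by positivity) hz,
    ← Real.rpow_mul hB.le, one_div, inv_mul_cancel₀ h3.ne', Real.rpow_one] at h
  have e : A * (x ^ w1 * y ^ w2 * z ^ w3) = δ ^ w1 * x ^ w1 * (δ ^ w2 * y ^ w2) * (B * z ^ w3) := by
    simp only [B]
    have : δ ^ w1 ≠ 0 := by positivity
    have : δ ^ w2 ≠ 0 := by positivity
    field_simp
  rw [e]
  rw [← one_div] at h
  refine h.trans ?_
  have : 0 ≤ δ * x := by positivity
  have : 0 ≤ δ * y := by positivity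
  have : 0 ≤ B ^ (1 / w3) * z := by positivity
  nlinarith

theorem int_lin3 {f g h : E d → ℝ} (hf : Continuous f) (hg : Continuous g) (hh : Continuous h)
    {a b c : ℝ} : ∫ x in Box d, (a * f x + b * g x + c * h x) =
      a * (∫ x in Box d, f x) + b * (∫ x in Box d, g x) + c * ∫ x in Box d, h x := by
  rw [← integral_const_mul, ← integral_const_mul, ← integral_const_mul]
  rw [← integral_add ((Box_int hf).const_mul a) ((Box_int hg).const_mul b)]
  exact integral_add (((Box_int hf).const_mul a).add ((Box_int hg).const_mul b)) 
    ((Box_int hh).const_mul c)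

theorem pow_cont {w : E d → ℝ} (hw : Continuous w) {p : ℝ} (hp : 0 ≤ p) :
    Continuous fun x => |w x| ^ p := hw.abs.rpow_const fun _ => Or.inr hp

theorem stepA {k n : ℕ} (hn : n + 1 < k) {δ : ℝ} (hδ : 0 < δ) : ∃ C : ℝ, 0 < C ∧
    ∀ (v X : E d → ℝ), Sm v → Periodic v → Continuous X → (∀ y, 0 ≤ X y) →
      (∀ y, |v y| ≤ X y ^ ((n : ℝ) / (2 * k))) → ∀ i,
      ∫ y in Box d, |pD i v y| ^ ((2 * k : ℝ) / (n + 1)) ≤ 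
        δ * (∫ y in Box d, X y) + C * ∫ y in Box d, |pD i (pD i v) y| ^ ((2 * k : ℝ) / (n + 2)) := by
  have hk : (0 : ℝ) < k := by have : 0 < k := by omega
                              exact_mod_cast this
  have hnk : (n : ℝ) + 1 < k := by exact_mod_cast hn
  have hn0 : (0 : ℝ) ≤ n := Nat.cast_nonneg n
  obtain ⟨q, hqd⟩ : ∃ q : ℝ, q = (2 * k : ℝ) / (n + 1) - 2 := ⟨_, rfl⟩
  have hp : (2 * k : ℝ) / (n + 1) = q + 2 := by linarith
  have hq : 0 < q := by
    have : 2 < (2 * k : ℝ) / (n + 1) := by rw [lt_div_iff₀ (by positivity)]; linarith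
    linarith
  let δ' := min (δ / 2) (1 / 2)
  have hδ' : 0 < δ' := by positivity
  have hd1 : δ' ≤ δ / 2 := min_le_left _ _
  have hd2 : δ' ≤ 1 / 2 := min_le_right _ _
  have hw2 : q / (q + 2) = 1 - (n + 1) / k := by
    rw [← hp, hqd]; field_simp
  obtain ⟨C, hC, H⟩ := young (w1 := (n : ℝ) / (2 * k)) (w2 := q / (q + 2)) (w3 := (n + 2 : ℝ) / (2 * k))
    (by positivity) (by positivity) (by positivity) (by rw [hw2]; field_simp; ring)
    (A := q + 1) (by positivity) hδ'
  refine ⟨2 * C, by positivity, fun v X hv hpv hX hX0 hvX i => ?_⟩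
  have c1 := pow_cont (hv.pD i).cont (p := q + 2) (by positivity)
  have c0 := pow_cont (hv.pD i).cont (p := q) (by positivity)
  have c2 := pow_cont ((hv.pD i).pD i).cont (p := (2 * k : ℝ) / (n + 2)) (by positivity)
  have h1 := ibp hv hpv i hq
  have h2 : ∫ x in Box d, (q + 1) * (|v x| * |pD i v x| ^ q * |pD i (pD i v) x|) ≤
      ∫ x in Box d, (δ' * X x + δ' * |pD i v x| ^ (q + 2) + C * |pD i (pD i v) x| ^ ((2 * k : ℝ) / (n + 2))) := by
    apply setIntegral_mono
    · exact Box_int (continuous_const.mul ((hv.cont.abs.mul c0).mul ((hv.pD i).pD i).cont.abs))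
    · exact Box_int (((continuous_const.mul hX).add (continuous_const.mul c1)).add (continuous_const.mul c2))
    · intro x
      refine le_trans ?_ (H (X x) (|pD i v x| ^ (q + 2)) (|pD i (pD i v) x| ^ ((2 * k : ℝ) / (n + 2)))
        (hX0 x) (by positivity) (by positivity))
      rw [← Real.rpow_mul (abs_nonneg _), ← Real.rpow_mul (abs_nonneg _)]
      rw [show (q + 2) * (q / (q + 2)) = q by field_simp, 
        show (2 * k : ℝ) / (n + 2) * ((n + 2 : ℝ) / (2 * k)) = 1 by field_simp, Real.rpow_one]
      have := hvX x
      simp only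
      gcongr
  rw [int_lin3 hX c1 c2] at h2
  rw [hp]
  have hXi : 0 ≤ ∫ y in Box d, X y := integral_nonneg hX0
  have hWi : 0 ≤ ∫ y in Box d, |pD i v y| ^ (q + 2) := integral_nonneg fun y => by positivity
  nlinarith [mul_le_mul_of_nonneg_right hd1 hXi, mul_le_mul_of_nonneg_right hd2 hWi]

def II (k j : ℕ) (l : List (Fin d)) (u : E d → ℝ) : ℝ :=
  ∫ x in Box d, |Dl l u x| ^ ((2 * k : ℝ) / j)

theorem II_nonneg (k j : ℕ) (l : List (Fin d)) (u : E d → ℝ) : 0 ≤ II k j l u :=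
  integral_nonneg fun y => by positivity

theorem gn1 (k n : ℕ) (hn : n + 1 < k) : ∃ C : ℝ, 0 < C ∧
    ∀ u : E d → ℝ, Sm u → Periodic u → (∀ x, |u x| ≤ 1) → ∀ B : ℝ,
      (∀ l : List (Fin d), l.length = n + 2 → II k (n + 2) l u ≤ B) →
      ∀ l : List (Fin d), l.length = n + 1 → II k (n + 1) l u ≤ C * B := by
  induction n with
  | zero =>
    obtain ⟨C, hC, H⟩ := stepA (d := d) hn one_pos
    refine ⟨C, hC, fun u hu hp h1 B hB l hl => ?_⟩
    match l, hl with
    | [i], _ =>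
      have := H u (fun _ => 0) hu hp continuous_const (fun _ => le_rfl) (by simpa using h1) i
      have h2 := hB [i, i] rfl
      unfold II
      simp only [II, Dl, List.foldr] at h2 ⊢
      push_cast at h2 ⊢
      simp only [integral_zero, mul_zero, zero_add, Nat.cast_zero] at this h2 ⊢
      exact this.trans (mul_le_mul_of_nonneg_left h2 hC.le)
  | succ n ih =>
    obtain ⟨C0, hC0, H0⟩ := ih (by omega)
    obtain ⟨C, hC, H⟩ := stepA (d := d) hn (δ := 1 / (2 * C0)) (by positivity)
    refine ⟨2 * C, by positivity, fun u hu hp h1 B hB l hl => ?_⟩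
    obtain ⟨l0, hl0, hmax⟩ := Set.exists_max_image {l : List (Fin d) | l.length = n + 2} 
      (fun l => II k (n + 2) l u) (List.finite_length_eq _ _) ⟨l, hl⟩
    have hlow := H0 u hu hp h1 (II k (n + 2) l0 u) (fun l hl => hmax l hl)
    have hl0 : l0.length = n + 2 := hl0
    refine (hmax l hl).trans ?_
    match l0, hl0 with
    | i :: l', hl' =>
      have hl' : l'.length = n + 1 := by simpa using hl'
      have hk : (k : ℝ) ≠ 0 := by
        have : k ≠ 0 := by omega
        exact_mod_cast this
      have h3 := H (Dl l' u) (fun y => |Dl l' u y| ^ ((2 * k : ℝ) / (n + 1 : ℕ))) (hu.Dl l') (Dl_per hp l')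
        (pow_cont (hu.Dl l').cont (by positivity)) (fun y => by positivity) 
        (fun y => by
          rw [← Real.rpow_mul (abs_nonneg _), show (2 * k : ℝ) / (n + 1 : ℕ) * ((n + 1 : ℕ) / (2 * k)) = 1 by
            field_simp, Real.rpow_one]) i
      have h4 := hB (i :: i :: l') (by simp [hl'])
      have h5 := hlow l' hl'
      have e1 : ∫ y in Box d, |pD i (Dl l' u) y| ^ ((2 * k : ℝ) / ((n + 1 : ℕ) + 1)) = II k (n + 2) (i :: l') u := by
        unfold II; push_cast; rw [add_assoc, one_add_one_eq_two]; rfl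
      have e2 : ∫ y in Box d, |pD i (pD i (Dl l' u)) y| ^ ((2 * k : ℝ) / ((n + 1 : ℕ) + 2)) = II k (n + 1 + 2) (i :: i :: l') u := by
        unfold II; push_cast; rfl
      rw [e1, e2] at h3
      change _ ≤ 1 / (2 * C0) * II k (n + 1) l' u + _ at h3
      have h6 : 1 / (2 * C0) * II k (n + 1) l' u ≤ 1 / (2 * C0) * (C0 * II k (n + 2) (i :: l') u) :=
        mul_le_mul_of_nonneg_left h5 (by positivity)
      have h7 : 1 / (2 * C0) * (C0 * II k (n + 2) (i :: l') u) = II k (n + 2) (i :: l') u / 2 := by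
        field_simp
      have h8 := mul_le_mul_of_nonneg_left h4 hC.le
      have e3 : n + 1 + 1 = n + 2 := rfl
      linarith

theorem gn2 (k e : ℕ) : ∀ j, 1 ≤ j → j + e = k → ∃ C : ℝ, 0 < C ∧
    ∀ u : E d → ℝ, Sm u → Periodic u → (∀ x, |u x| ≤ 1) → ∀ B : ℝ,
      (∀ l : List (Fin d), l.length = k → II k k l u ≤ B) →
      ∀ l : List (Fin d), l.length = j → II k j l u ≤ C * B := by
  induction e with
  | zero =>
    intro j hj hjk
    obtain rfl : j = k := hjk
    exact ⟨1, one_pos, fun u _ _ _ B hB l hl => by simpa using hB l hl⟩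
  | succ e ih =>
    intro j hj hjk
    obtain ⟨n, rfl⟩ : ∃ n, j = n + 1 := ⟨j - 1, by omega⟩
    obtain ⟨C1, hC1, H1⟩ := ih (n + 2) (by omega) (by omega)
    obtain ⟨C2, hC2, H2⟩ := gn1 (d := d) k n (by omega)
    refine ⟨C2 * C1, by positivity, fun u hu hp h1 B hB l hl => ?_⟩
    have := H2 u hu hp h1 _ (H1 u hu hp h1 B hB) l hl
    linarith

/-- uniform in `j` -/
theorem gn3 (k : ℕ) : ∃ C : ℝ, 0 < C ∧ ∀ j, 1 ≤ j → j ≤ k → 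
    ∀ u : E d → ℝ, Sm u → Periodic u → (∀ x, |u x| ≤ 1) → ∀ B : ℝ, 0 ≤ B →
      (∀ l : List (Fin d), l.length = k → II k k l u ≤ B) →
      ∀ l : List (Fin d), l.length = j → II k j l u ≤ C * B := by
  have h : ∀ j : ℕ, ∃ C : ℝ, 0 < C ∧ (1 ≤ j → j ≤ k → 
    ∀ u : E d → ℝ, Sm u → Periodic u → (∀ x, |u x| ≤ 1) → ∀ B : ℝ,
      (∀ l : List (Fin d), l.length = k → II k k l u ≤ B) →
      ∀ l : List (Fin d), l.length = j → II k j l u ≤ C * B) := by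
    intro j
    by_cases hj : 1 ≤ j ∧ j ≤ k
    · obtain ⟨C, hC, H⟩ := gn2 (d := d) k (k - j) j hj.1 (by omega)
      exact ⟨C, hC, fun _ _ => H⟩
    · exact ⟨1, one_pos, fun h1 h2 => absurd ⟨h1, h2⟩ hj⟩
  choose C hC H using h
  refine ⟨∑ j ∈ Finset.range (k + 1), C j, 
    Finset.sum_pos (fun j _ => hC j) ⟨0, by simp⟩, fun j h1 h2 u hu hp hb B hB0 hB l hl => ?_⟩
  refine (H j h1 h2 u hu hp hb B hB l hl).trans (mul_le_mul_of_nonneg_right ?_ hB0)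
  exact Finset.single_le_sum (f := C) (fun j _ => (hC j).le) (by simp; omega)

theorem per_bdd {u : E d → ℝ} (hu : Continuous u) (hp : Periodic u) :
    BddAbove (Set.range fun x => |u x|) := by
  let P : AddSubgroup (E d) :=
    { carrier := {p | ∀ x, u (x + p) = u x}
      zero_mem' := fun x => by simp
      add_mem' := fun {a b} ha hb x => by rw [← add_assoc, hb, ha]
      neg_mem' := fun {a} ha x => by
        have := ha (x + -a)
        rw [neg_add_cancel_right] at this
        exact this.symm }
  have hP : ∀ n : Fin d → ℤ, ∑ i, n i • EuclideanSpace.single i (1 : ℝ) ∈ P := fun n =>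
    P.sum_mem fun i _ => P.zsmul_mem (fun x => hp x i) _
  obtain ⟨M, hM⟩ := (isCompact_closedBall (0 : E d) (Real.sqrt d)).exists_bound_of_continuousOn hu.continuousOn
  refine ⟨M, ?_⟩
  rintro _ ⟨x, rfl⟩
  have h1 := hP (fun i => -⌊x i⌋) x
  simp only
  rw [← h1]
  apply hM
  rw [mem_closedBall_zero_iff, EuclideanSpace.norm_eq]
  apply Real.sqrt_le_sqrt
  have hc : ∀ i, (x + ∑ j, (-⌊x j⌋) • EuclideanSpace.single j (1 : ℝ)) i = Int.fract (x i) := by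
    intro i
    rw [PiLp.add_apply, WithLp.ofLp_sum, Finset.sum_apply]
    rw [Finset.sum_eq_single i]
    · simp [Int.fract, sub_eq_add_neg]
    · intro b _ hb
      simp [hb.symm]
    · simp
  calc _ ≤ ∑ i : Fin d, (1 : ℝ) := by
        apply Finset.sum_le_sum
        intro i _
        rw [hc, Real.norm_eq_abs, sq_abs]
        nlinarith [Int.fract_nonneg (x i), Int.fract_lt_one (x i)]
    _ = d := by simp

theorem le_supN {u : E d → ℝ} (hu : Continuous u) (hp : Periodic u) (x : E d) : |u x| ≤ supN u :=
  le_ciSup (per_bdd hu hp) x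

theorem supN_nonneg (u : E d → ℝ) : 0 ≤ supN u := Real.iSup_nonneg fun _ => abs_nonneg _

theorem HkNorm_nonneg (k : ℕ) (u : E d → ℝ) : 0 ≤ HkNorm k u := Real.sqrt_nonneg _

theorem le_Hk {k : ℕ} {u : E d → ℝ} (hu : Sm u) {l : List (Fin d)} (hl : l.length = k) :
    ∫ x in Box d, (Dl l u x) ^ 2 ≤ HkNorm k u ^ 2 := by
  have hnn : ∀ β : Fin d → Fin (k + 1), 0 ≤ 
      (if (∑ i, (β i : ℕ)) ≤ k then ∫ x in Box d, (multiD (fun i => (β i : ℕ)) u x) ^ 2 else 0) := by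
    intro β
    split_ifs
    · exact integral_nonneg fun x => sq_nonneg _
    · exact le_rfl
  unfold HkNorm
  rw [Real.sq_sqrt (Finset.sum_nonneg fun β _ => hnn β)]
  have h := Finset.single_le_sum (fun β _ => hnn β) 
    (Finset.mem_univ (fun i => ⟨l.count i, by have := l.count_le_length (a := i); omega⟩ : Fin d → Fin (k + 1)))
  simp only [sum_count, hl, le_refl, if_true, ← Dl_eq_multiD hu] at h
  exact h

theorem youngU (k : ℕ) {δ : ℝ} (hδ : 0 < δ) : ∃ C : ℝ, 0 < C ∧ ∀ a b : ℕ, 1 ≤ a → 1 ≤ b → a + b = k →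
    ∀ X Y : ℝ, (X * Y) ^ 2 ≤ δ * |Y| ^ ((2 * k : ℝ) / b) + C * |X| ^ ((2 * k : ℝ) / a) := by
  have h : ∀ a : ℕ, ∃ C : ℝ, 0 < C ∧ (1 ≤ a → ∀ b, 1 ≤ b → a + b = k →
    ∀ X Y : ℝ, (X * Y) ^ 2 ≤ δ * |Y| ^ ((2 * k : ℝ) / b) + C * |X| ^ ((2 * k : ℝ) / a)) := by
    intro a
    by_cases ha : 1 ≤ a ∧ 1 ≤ k - a
    · obtain ⟨b, hb⟩ : ∃ b, b = k - a := ⟨_, rfl⟩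
      have hb1 : 1 ≤ b := by omega
      have hk : (k : ℝ) = a + b := by
        have : k = a + b := by omega
        exact_mod_cast this
      have ha0 : (0 : ℝ) < a := by exact_mod_cast ha.1
      have hb0 : (0 : ℝ) < b := by exact_mod_cast hb1
      have hk0 : (0 : ℝ) < k := by rw [hk]; positivity
      obtain ⟨C, hC, H⟩ := young (w1 := 0) (w2 := (b : ℝ) / k) (w3 := (a : ℝ) / k) le_rfl
        (by positivity) (by positivity) (by rw [hk]; field_simp; ring) one_pos hδ
      refine ⟨C, hC, fun _ b' _ hb' X Y => ?_⟩
      obtain rfl : b' = b := by omega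
      have h := H 0 (|Y| ^ ((2 * k : ℝ) / b')) (|X| ^ ((2 * k : ℝ) / a)) le_rfl (by positivity) (by positivity)
      rw [← Real.rpow_mul (abs_nonneg _), ← Real.rpow_mul (abs_nonneg _)] at h
      rw [show (2 * k : ℝ) / b' * (b' / k) = 2 by field_simp, 
        show (2 * k : ℝ) / a * (a / k) = 2 by field_simp] at h
      simp only [Real.rpow_two, sq_abs, Real.rpow_zero] at h
      nlinarith
    · exact ⟨1, one_pos, fun h1 b h2 h3 => absurd ⟨h1, by omega⟩ ha⟩
  choose C hC H using h
  refine ⟨∑ j ∈ Finset.range (k + 1), C j, 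
    Finset.sum_pos (fun j _ => hC j) ⟨0, by simp⟩, fun a b ha hb hab X Y => ?_⟩
  refine (H a ha b hb hab X Y).trans ?_
  gcongr
  exact Finset.single_le_sum (f := C) (fun j _ => (hC j).le) (by simp; omega)

theorem nrmlz {k : ℕ} (hk : 0 < k) {g : E d → ℝ} (hg : Sm g) (hp : Periodic g) (hM : 0 < supN g) :
    Sm (fun x => (supN g)⁻¹ * g x) ∧ Periodic (fun x => (supN g)⁻¹ * g x) ∧ 
    (∀ x, |(supN g)⁻¹ * g x| ≤ 1) ∧
    ∀ l : List (Fin d), l.length = k → II k k l (fun x => (supN g)⁻¹ * g x) ≤ ((supN g)⁻¹ * HkNorm k g) ^ 2 := by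
  refine ⟨contDiff_const.mul hg, fun x i => by simp only [hp x i], fun x => ?_, fun l hl => ?_⟩
  · rw [abs_mul, abs_of_pos (inv_pos.2 hM), inv_mul_le_iff₀ hM, mul_one]
    exact le_supN hg.cont hp x
  · unfold II
    have hk' : (k : ℝ) ≠ 0 := by exact_mod_cast hk.ne'
    rw [Dl_smul, show (2 * k : ℝ) / k = 2 by field_simp]
    simp only [Real.rpow_two, sq_abs, mul_pow]
    rw [integral_const_mul]
    exact mul_le_mul_of_nonneg_left (le_Hk hg hl) (by positivity)

theorem Dl_zero {g : E d → ℝ} (hg : Sm g) (hp : Periodic g) (hM : supN g = 0) (l : List (Fin d)) (x : E d) :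
    Dl l g x = 0 := by
  have : g = fun x => 0 * g x := by
    funext x
    have := le_supN hg.cont hp x
    rw [hM] at this
    rw [zero_mul]
    exact abs_nonpos_iff.1 this
  rw [this, Dl_smul]; simp

theorem core (k : ℕ) (hk : 0 < k) {δ : ℝ} (hδ : 0 < δ) : ∃ C : ℝ, 0 < C ∧ 
    ∀ l₁ l₂ : List (Fin d), 1 ≤ l₁.length → 1 ≤ l₂.length → l₁.length + l₂.length = k →
      ∀ g₁ g₂ : E d → ℝ, Sm g₁ → Sm g₂ → Periodic g₁ → Periodic g₂ →
      ∫ x in Box d, (Dl l₁ g₁ x * Dl l₂ g₂ x) ^ 2 ≤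
        δ * (supN g₁ * HkNorm k g₂) ^ 2 + C * (HkNorm k g₁ * supN g₂) ^ 2 := by
  obtain ⟨K, hK, HK⟩ := gn3 (d := d) k
  obtain ⟨C, hC, HC⟩ := youngU k (δ := δ / K) (by positivity)
  refine ⟨C * K, by positivity, fun l₁ l₂ h1 h2 h12 g₁ g₂ s₁ s₂ p₁ p₂ => ?_⟩
  rcases (supN_nonneg g₁).eq_or_lt with hM | hM₁
  · simp only [Dl_zero s₁ p₁ hM.symm, zero_mul]
    simp only [ne_eq, OfNat.ofNat_ne_zero, not_false_eq_true, zero_pow, integral_zero]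
    positivity
  rcases (supN_nonneg g₂).eq_or_lt with hM | hM₂
  · simp only [Dl_zero s₂ p₂ hM.symm, mul_zero]
    simp only [ne_eq, OfNat.ofNat_ne_zero, not_false_eq_true, zero_pow, integral_zero]
    positivity
  obtain ⟨a1, a2, a3, a4⟩ := nrmlz hk s₁ p₁ hM₁
  obtain ⟨b1, b2, b3, b4⟩ := nrmlz hk s₂ p₂ hM₂
  have A := HK _ h1 (by omega) _ a1 a2 a3 _ (sq_nonneg _) a4 l₁ rfl
  have B := HK _ h2 (by omega) _ b1 b2 b3 _ (sq_nonneg _) b4 l₂ rfl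
  set M₁ := supN g₁
  set M₂ := supN g₂
  set u₁ : E d → ℝ := fun x => M₁⁻¹ * g₁ x
  set u₂ : E d → ℝ := fun x => M₂⁻¹ * g₂ x
  have c1 := (a1.Dl l₁).cont
  have c2 := (b1.Dl l₂).cont
  have d1 := pow_cont c1 (p := (2 * k : ℝ) / l₁.length) (by positivity)
  have d2 := pow_cont c2 (p := (2 * k : ℝ) / l₂.length) (by positivity)
  have h3 : ∫ x in Box d, (Dl l₁ u₁ x * Dl l₂ u₂ x) ^ 2 ≤ 
      ∫ x in Box d, (0 * 0 + δ / K * |Dl l₂ u₂ x| ^ ((2 * k : ℝ) / l₂.length) + 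
        C * |Dl l₁ u₁ x| ^ ((2 * k : ℝ) / l₁.length)) := by
    apply setIntegral_mono (Box_int ((c1.mul c2).pow 2))
    · exact Box_int ((continuous_const.add (continuous_const.mul d2)).add (continuous_const.mul d1))
    · intro x
      have := HC _ _ h1 h2 h12 (Dl l₁ u₁ x) (Dl l₂ u₂ x)
      simp only [mul_zero, zero_add]
      exact this
  rw [int_lin3 continuous_const d2 d1] at h3
  change _ ≤ _ + δ / K * II k l₂.length l₂ u₂ + C * II k l₁.length l₁ u₁ at h3
  have h4 : ∫ x in Box d, (Dl l₁ u₁ x * Dl l₂ u₂ x) ^ 2 = 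
      (M₁⁻¹ * M₂⁻¹) ^ 2 * ∫ x in Box d, (Dl l₁ g₁ x * Dl l₂ g₂ x) ^ 2 := by
    rw [← integral_const_mul, Dl_smul, Dl_smul]
    congr 1
    funext x
    ring
  rw [h4] at h3
  have h5 := mul_le_mul_of_nonneg_left B (by positivity : 0 ≤ δ / K)
  have h6 := mul_le_mul_of_nonneg_left A hC.le
  have h7 : (M₁⁻¹ * M₂⁻¹) ^ 2 * ∫ x in Box d, (Dl l₁ g₁ x * Dl l₂ g₂ x) ^ 2 ≤
    δ / K * (K * (M₂⁻¹ * HkNorm k g₂) ^ 2) + C * (K * (M₁⁻¹ * HkNorm k g₁) ^ 2) := by linarith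
  have h8 := mul_le_mul_of_nonneg_left h7 (by positivity : 0 ≤ (M₁ * M₂) ^ 2)
  refine le_trans (le_of_eq ?_) (h8.trans (le_of_eq ?_))
  · field_simp
  · field_simp

theorem triv {k : ℕ} {l₁ : List (Fin d)} (h : l₁.length = k) {g₁ g₂ : E d → ℝ} 
    (s₁ : Sm g₁) (s₂ : Sm g₂) (p₂ : Periodic g₂) :
    L2Norm (fun x => Dl l₁ g₁ x * g₂ x) ≤ HkNorm k g₁ * supN g₂ := by
  unfold L2Norm
  apply Real.sqrt_le_iff.2
  refine ⟨mul_nonneg (HkNorm_nonneg _ _) (supN_nonneg _), ?_⟩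
  rw [mul_pow]
  refine le_trans ?_ (mul_le_mul_of_nonneg_right (le_Hk s₁ h) (sq_nonneg _))
  rw [← integral_mul_const]
  have c := (s₁.Dl l₁).cont
  apply setIntegral_mono (Box_int ((c.mul s₂.cont).pow 2)) (Box_int ((c.pow 2).mul continuous_const))
  intro x
  simp only [mul_pow]
  have h1 := le_supN s₂.cont p₂ x
  have h2 : g₂ x ^ 2 ≤ supN g₂ ^ 2 := by
    rw [← sq_abs]; gcongr
  exact mul_le_mul_of_nonneg_left h2 (sq_nonneg _)

theorem ml_nil {a : Fin d → ℕ} (h : ∑ i, a i = 0) : ml a = [] :=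
  List.length_eq_zero_iff.1 ((ml_length a).trans h)

theorem partB (d k : ℕ) (hk : 0 < k) :
    ∀ ε : ℝ, 0 < ε → ∃ Cε : ℝ, 0 < Cε ∧
      ∀ mb m : Fin d → ℕ, ((∑ i, mb i) + ∑ i, m i) = k → mb ≠ 0 →
        ∀ g₁ g₂ : E d → ℝ, ContDiff ℝ (⊤ : ℕ∞) g₁ → ContDiff ℝ (⊤ : ℕ∞) g₂ →
          Periodic g₁ → Periodic g₂ →
          L2Norm (fun x => multiD mb g₁ x * multiD m g₂ x)
            ≤ ε * (supN g₁ * HkNorm k g₂) + Cε * (HkNorm k g₁ * supN g₂) := by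
  intro ε hε
  obtain ⟨C, hC, H⟩ := core (d := d) k hk (δ := ε ^ 2) (by positivity)
  refine ⟨Real.sqrt C + 1, by positivity, fun mb m hm hmb g₁ g₂ s₁ s₂ p₁ p₂ => ?_⟩
  have X0 : 0 ≤ supN g₁ * HkNorm k g₂ := mul_nonneg (supN_nonneg _) (HkNorm_nonneg _ _)
  have Y0 : 0 ≤ HkNorm k g₁ * supN g₂ := mul_nonneg (HkNorm_nonneg _ _) (supN_nonneg _)
  have hS : 0 ≤ Real.sqrt C := Real.sqrt_nonneg _
  rw [multiD_eq, multiD_eq]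
  by_cases h0 : ∑ i, m i = 0
  · rw [ml_nil h0]
    have := triv (k := k) (l₁ := ml mb) (by rw [ml_length]; omega) s₁ s₂ p₂
    refine this.trans ?_
    nlinarith [mul_nonneg hε.le X0, mul_nonneg hS Y0]
  · have h1 : ∑ i, mb i ≠ 0 := by
      intro h
      apply hmb
      funext i
      exact (Finset.sum_eq_zero_iff.1 h) i (Finset.mem_univ i)
    have h := H (ml mb) (ml m) (by rw [ml_length]; omega) (by rw [ml_length]; omega)
      (by rw [ml_length, ml_length]; exact hm) g₁ g₂ s₁ s₂ p₁ p₂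
    unfold L2Norm
    apply Real.sqrt_le_iff.2
    refine ⟨by positivity, h.trans ?_⟩
    nth_rewrite 1 [← Real.sq_sqrt hC.le]
    have e1 := mul_nonneg hε.le X0
    have e2 := mul_nonneg hS Y0
    generalize supN g₁ * HkNorm k g₂ = X at *
    generalize HkNorm k g₁ * supN g₂ = Y at *
    nlinarith [mul_nonneg e1 e2, mul_nonneg e1 Y0, mul_nonneg e2 Y0, sq_nonneg Y]

/-- **Interpolation product inequality on the torus**: for `k ≥ d/2` and multi-indices
`m̄, m` with `|m̄| + |m| = k`, (a) `‖(∂^m̄ g₁)(∂^m g₂)‖_{L²} ≤ C (‖g₁‖_∞ ‖g₂‖_{H^k}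
+ ‖g₁‖_{H^k} ‖g₂‖_∞)` with `C = C(k,d)`; and (b) if `m̄ ≠ 0`, for every `ε > 0` there is
`C_ε = C(ε,k,d)` with `‖(∂^m̄ g₁)(∂^m g₂)‖_{L²} ≤ ε ‖g₁‖_∞ ‖g₂‖_{H^k}
+ C_ε ‖g₁‖_{H^k} ‖g₂‖_∞`. -/
theorem sobolev_product_interpolation
    (d k : ℕ) (hd : 1 ≤ d) (hk : 0 < k) (hkd : d ≤ 2 * k) :
    (∃ C : ℝ, 0 < C ∧ ∀ mb m : Fin d → ℕ, ((∑ i, mb i) + ∑ i, m i) = k →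
      ∀ g₁ g₂ : E d → ℝ, ContDiff ℝ (⊤ : ℕ∞) g₁ → ContDiff ℝ (⊤ : ℕ∞) g₂ →
        Periodic g₁ → Periodic g₂ →
        L2Norm (fun x => multiD mb g₁ x * multiD m g₂ x)
          ≤ C * (supN g₁ * HkNorm k g₂ + HkNorm k g₁ * supN g₂)) ∧
    (∀ ε : ℝ, 0 < ε → ∃ Cε : ℝ, 0 < Cε ∧
      ∀ mb m : Fin d → ℕ, ((∑ i, mb i) + ∑ i, m i) = k → mb ≠ 0 →
        ∀ g₁ g₂ : E d → ℝ, ContDiff ℝ (⊤ : ℕ∞) g₁ → ContDiff ℝ (⊤ : ℕ∞) g₂ →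
          Periodic g₁ → Periodic g₂ →
          L2Norm (fun x => multiD mb g₁ x * multiD m g₂ x)
            ≤ ε * (supN g₁ * HkNorm k g₂) + Cε * (HkNorm k g₁ * supN g₂)) := by
  have hB := partB d k hk
  refine ⟨?_, hB⟩
  obtain ⟨C, hC, H⟩ := hB 1 one_pos
  refine ⟨C + 1, by positivity, fun mb m hm g₁ g₂ s₁ s₂ p₁ p₂ => ?_⟩
  have X0 : 0 ≤ supN g₁ * HkNorm k g₂ := mul_nonneg (supN_nonneg _) (HkNorm_nonneg _ _)
  have Y0 : 0 ≤ HkNorm k g₁ * supN g₂ := mul_nonneg (HkNorm_nonneg _ _) (supN_nonneg _)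
  by_cases h0 : mb = 0
  · subst h0
    have h1 : ∑ i, m i = k := by simpa using hm
    have := triv (k := k) (l₁ := ml m) (by rw [ml_length]; omega) s₂ s₁ p₁
    rw [multiD_eq, multiD_eq, ml_nil (a := 0) (by simp)]
    have e : (fun x => Dl [] g₁ x * Dl (ml m) g₂ x) = fun x => Dl (ml m) g₂ x * g₁ x := by
      funext x
      rw [mul_comm]
      rfl
    rw [e]
    nlinarith [mul_nonneg hC.le X0, mul_nonneg hC.le Y0]
  · have := H mb m hm h0 g₁ g₂ s₁ s₂ p₁ p₂
    nlinarith [mul_nonneg hC.le X0, mul_nonneg hC.le Y0]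
end
end
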